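/- arXiv:1801.00316 — 4 statements merged into one kernel-verified Lean document; each statement's English description precedes it below -/
import Mathlib

section
/- Let m be a positive integer, let p ∈ [0,1] be a real number, and let S be a subset of {1,…,m}. Then ∑_{N ⊆ {1,…,m}} p^{|N|} · (1-p)^{m-|N|} · g(N) = (1 - (1-p)^m) · |S| / m, where g(N) = |N ∩ S| / |N| if N is nonempty and g(N) = 0 if N is empty. -/
lemma pull_symm (U : Finset ℕ) (f : ℕ → ℝ) (i j : ℕ) (hi : i ∈ U) (hj : j ∈ U) :
    ∑ N ∈ U.powerset, (if i ∈ N then f N.card else 0)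
      = ∑ N ∈ U.powerset, (if j ∈ N then f N.card else 0) := by
  have hU : ∀ N ∈ U.powerset, N.map (Equiv.swap i j).toEmbedding ∈ U.powerset := by
    intro N hN
    rw [Finset.mem_powerset] at hN ⊢
    intro x hx
    rw [Finset.mem_map] at hx
    obtain ⟨y, hy, rfl⟩ := hx
    have := hN hy
    simp only [Equiv.coe_toEmbedding, Equiv.swap_apply_def]
    split_ifs <;> assumption
  have hinv : ∀ N ∈ U.powerset,
      (N.map (Equiv.swap i j).toEmbedding).map (Equiv.swap i j).toEmbedding = N := by
    intro N _
    ext x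
    simp [Finset.mem_map_equiv]
  refine Finset.sum_nbij' (fun N => N.map (Equiv.swap i j).toEmbedding)
    (fun N => N.map (Equiv.swap i j).toEmbedding) hU hU hinv hinv ?_
  intro N _
  simp [Finset.mem_map_equiv]

/-- Probability that a random neighborhood is nonempty and a uniformly random neighbor lies in
the informed set S: exact pull probability identity. -/
theorem random_subset_pull_probability (m : ℕ) (hm : 0 < m) (p : ℝ)
    (hp0 : 0 ≤ p) (hp1 : p ≤ 1) (S : Finset ℕ) (hS : S ⊆ Finset.Icc 1 m) :
    ∑ N ∈ (Finset.Icc 1 m).powerset,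
        p ^ N.card * (1 - p) ^ (m - N.card) *
          (if N.Nonempty then ((N ∩ S).card : ℝ) / N.card else 0)
      = (1 - (1 - p) ^ m) * S.card / m := by
  have hcard : (Finset.Icc 1 m).card = m := by simp
  have h1m : 1 ∈ Finset.Icc 1 m := by simp; omega
  generalize Finset.Icc 1 m = U at *
  set f : ℕ → ℝ := fun k => p ^ k * (1 - p) ^ (m - k) / k with hf
  set C : ℝ := ∑ N ∈ U.powerset, (if 1 ∈ N then f N.card else 0) with hC
  have key : ∀ T ⊆ U, ∑ N ∈ U.powerset, p ^ N.card * (1 - p) ^ (m - N.card) *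
          (if N.Nonempty then ((N ∩ T).card : ℝ) / N.card else 0) = T.card * C := by
    intro T hT
    have h1 : ∑ i ∈ T, ∑ N ∈ U.powerset, (if i ∈ N then f N.card else 0) = T.card * C := by
      rw [Finset.sum_congr rfl (fun i hi => pull_symm U f i 1 (hT hi) h1m)]
      simp [hC]
    rw [← h1, Finset.sum_comm]
    refine Finset.sum_congr rfl fun N _ => ?_
    rw [← Finset.sum_filter, Finset.sum_const, Finset.filter_mem_eq_inter, Finset.inter_comm T N,
      nsmul_eq_mul]
    split_ifs with h
    · simp only [hf]; ring
    · rw [Finset.not_nonempty_iff_eq_empty] at h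
      simp [h]
  have hm' : (m : ℝ) ≠ 0 := by positivity
  have tot : (m : ℝ) * C = 1 - (1 - p) ^ m := by
    have h2 := key U subset_rfl
    rw [hcard] at h2
    rw [← h2]
    have h3 := Finset.sum_pow_mul_eq_add_pow p (1 - p) U
    rw [hcard, add_sub_cancel, one_pow] at h3
    rw [eq_sub_iff_add_eq]
    have h4 : (1 - p) ^ m = ∑ N ∈ U.powerset, if N = ∅ then (1 - p) ^ m else 0 := by
      simp
    refine Eq.trans ?_ h3
    rw [h4]
    rw [← Finset.sum_add_distrib]
    refine Finset.sum_congr rfl fun N hN => ?_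
    rw [Finset.inter_eq_left.mpr (Finset.mem_powerset.mp hN)]
    rcases N.eq_empty_or_nonempty with h | h
    · simp [h]
    · have : (N.card : ℝ) ≠ 0 := by exact_mod_cast h.card_pos.ne'
      simp [h, h.ne_empty, this]
  rw [key S hS, ← tot]
  field_simp
end

section
/- Let n be a positive integer, let a be a real number with 0 < a < n, and let j, k be integers with 1 ≤ j ≤ k ≤ n. Then C(k, j) · (a/n)^j · (1 - a/n)^{k-j} ≤ k · (a/n) · (1 - a/n)^{k-1} · (1/j!) · (a·k/(n - a))^{j-1}. -/
/-- Quantitative bound on the probability of exactly j informed neighbors, relative to the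
probability of exactly one informed neighbor (equation (5) in the proof of Lemma 6). -/
theorem exactly_j_neighbors_bound (n : ℕ) (hn : 0 < n) (a : ℝ) (ha : 0 < a) (han : a < n)
    (j k : ℕ) (hj : 1 ≤ j) (hjk : j ≤ k) (hkn : k ≤ n) :
    (Nat.choose k j : ℝ) * (a / n) ^ j * (1 - a / n) ^ (k - j)
      ≤ k * (a / n) * (1 - a / n) ^ (k - 1) * (1 / (Nat.factorial j)) *
          (a * k / (n - a)) ^ (j - 1) := by
  have hn' : (0 : ℝ) < n := by exact_mod_cast hn
  obtain ⟨i, rfl⟩ : ∃ i, j = i + 1 := ⟨j - 1, by omega⟩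
  obtain ⟨m, rfl⟩ : ∃ m, k = m + (i + 1) := ⟨k - (i + 1), by omega⟩
  have e1 : m + (i + 1) - (i + 1) = m := by omega
  have e2 : m + (i + 1) - 1 = m + i := by omega
  have e3 : i + 1 - 1 = i := by omega
  rw [e1, e2, e3]
  have hc := Nat.choose_le_pow_div (α := ℝ) (i + 1) (m + (i + 1))
  generalize m + (i + 1) = K at *
  have hp : 0 < a / n := by positivity
  have hq : 0 < 1 - a / n := by
    rw [sub_pos, div_lt_one hn']
    exact han
  have hr : a * K / (n - a) = (K * (a / n)) / (1 - a / n) := by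
    have h1 : (n : ℝ) - a ≠ 0 := by linarith
    have h2 : (1 : ℝ) - a / n = (n - a) / n := by field_simp
    rw [h2]
    field_simp
  rw [hr]
  generalize a / (n : ℝ) = p at *
  generalize 1 - p = q at *
  have hR : (K : ℝ) * p * q ^ (m + i) * (1 / (Nat.factorial (i + 1))) * (K * p / q) ^ i
      = (K : ℝ) ^ (i + 1) / (Nat.factorial (i + 1)) * p ^ (i + 1) * q ^ m := by
    have hq0 : q ≠ 0 := hq.ne'
    rw [div_pow, mul_pow, pow_add q, pow_succ, pow_succ]
    field_simp
  rw [hR]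
  gcongr
end

section
/- Let (Ω, P) be a probability space and let A, B, E be events with P(E) < 1. Assume P(A ∩ B) · P(Eᶜ) ≤ P(A) · P(B ∩ Eᶜ). Then the covariance of the indicator random variables of A and B satisfies Cov(1_A, 1_B) = P(A ∩ B) - P(A)·P(B) ≤ P(A)·P(B)·P(E)/(1 - P(E)). -/
open MeasureTheory

/-- Abstract covariance bound: if P[A∩B]·P[Eᶜ] ≤ P[A]·P[B∩Eᶜ] (i.e. P[B|A] ≤ P[B|Eᶜ]) and
P[E] < 1, then Cov(1_A, 1_B) = P[A∩B] - P[A]P[B] ≤ P[A]·P[B]·P[E]/(1-P[E]). -/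
theorem covariance_bound_of_conditional {Ω : Type*} [MeasurableSpace Ω]
    (P : Measure Ω) [IsProbabilityMeasure P] (A B E : Set Ω)
    (hA : MeasurableSet A) (hB : MeasurableSet B) (hE : MeasurableSet E)
    (hE1 : (P E).toReal < 1)
    (hcond : (P (A ∩ B)).toReal * (P Eᶜ).toReal ≤ (P A).toReal * (P (B ∩ Eᶜ)).toReal) :
    (P (A ∩ B)).toReal - (P A).toReal * (P B).toReal
      ≤ (P A).toReal * (P B).toReal * (P E).toReal / (1 - (P E).toReal) := by
  have h1 : (P Eᶜ).toReal = 1 - (P E).toReal := probReal_compl_eq_one_sub hE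
  have h2 : (P (B ∩ Eᶜ)).toReal ≤ (P B).toReal :=
    ENNReal.toReal_mono (measure_ne_top P B) (measure_mono Set.inter_subset_left)
  have h3 : (P A).toReal * (P (B ∩ Eᶜ)).toReal ≤ (P A).toReal * (P B).toReal :=
    mul_le_mul_of_nonneg_left h2 ENNReal.toReal_nonneg
  rw [h1] at hcond
  rw [le_div_iff₀ (by linarith)]
  linarith
end

section
/- Let a > 0 be a real number. Then there exist a constant C > 0 and a natural number N such that for all integers n ≥ N and all integers k with 1 ≤ k ≤ n/2, setting μ := k/n, |(1 - (1 - a/n)^{n-k}) / (a·(1-μ)) - (1 - e^{-a})/a| ≤ C·μ. -/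
/-- Quantitative form of equation (8) in the proof of Lemma 6:
P[PL | INF(1)] = (1 - (1-a/n)^{n-k})/(a(1-μ)) = (1 - e^{-a})/a + O(μ) with μ = k/n. -/
theorem pull_given_one_informed_neighbor (a : ℝ) (ha : 0 < a) :
    ∃ C : ℝ, 0 < C ∧ ∃ N : ℕ, ∀ n : ℕ, N ≤ n → ∀ k : ℕ, 1 ≤ k → 2 * k ≤ n →
      |(1 - (1 - a / n) ^ (n - k)) / (a * (1 - (k : ℝ) / n)) - (1 - Real.exp (-a)) / a|
        ≤ C * ((k : ℝ) / n) := by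
  refine ⟨2 * (a + 2 * a ^ 2 + 1) / a, by positivity, ⌈2 * a⌉₊ + 1, ?_⟩
  intro n hn k hk hkn
  have hn0 : (0 : ℝ) < n := by
    have : 0 < n := by omega
    exact_mod_cast this
  have hn2 : 2 * a ≤ n := by
    have h1 := Nat.le_ceil (2 * a)
    have h2 : ((⌈2 * a⌉₊ : ℕ) : ℝ) ≤ n := by
      have : ⌈2 * a⌉₊ ≤ n := by omega
      exact_mod_cast this
    linarith
  have hk1 : (1 : ℝ) ≤ k := by exact_mod_cast hk
  have hk2 : 2 * (k : ℝ) ≤ n := by exact_mod_cast hkn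
  have hcast : ((n - k : ℕ) : ℝ) = n - k := Nat.cast_sub (by omega)
  obtain ⟨x, hx⟩ : ∃ x : ℝ, x = a / n := ⟨_, rfl⟩
  obtain ⟨m, hm⟩ : ∃ m : ℝ, m = (k : ℝ) / n := ⟨_, rfl⟩
  obtain ⟨q, hq⟩ : ∃ q : ℝ, q = (1 - x) ^ (n - k) := ⟨_, rfl⟩
  rw [← hx, ← hm, ← hq]
  have hnx : n * x = a := by rw [hx]; field_simp
  have hkx : k * x = a * m := by rw [hx, hm]; field_simp
  have hx0 : 0 < x := by rw [hx]; positivity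
  have hx2 : x ≤ 1 / 2 := by rw [hx, div_le_iff₀ hn0]; linarith
  have hm0 : 0 < m := by rw [hm]; positivity
  have hm2 : m ≤ 1 / 2 := by rw [hm, div_le_iff₀ hn0]; linarith
  have hxm : x ≤ a * m := by rw [← hkx]; nlinarith
  have hE1 : Real.exp (-a) ≤ 1 := Real.exp_le_one_iff.2 (by linarith)
  have hE0 := Real.exp_pos (-a)
  have hup : q ≤ Real.exp (-a) + a * m := by
    have h1 : q ≤ Real.exp (-a + a * m) := by
      have : Real.exp (-a + a * m) = Real.exp (-x) ^ (n - k) := by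
        rw [← Real.exp_nat_mul, hcast]
        congr 1
        linear_combination hnx - hkx
      rw [this, hq]
      exact pow_le_pow_left₀ (by linarith) (by linarith [Real.add_one_le_exp (-x)]) _
    have h2 : Real.exp (-a + a * m) * (1 - a * m) ≤ Real.exp (-a) := by
      have h3 := Real.add_one_le_exp (-(a * m))
      calc _ ≤ Real.exp (-a + a * m) * Real.exp (-(a * m)) :=
            mul_le_mul_of_nonneg_left (by linarith) (Real.exp_pos _).le
        _ = _ := by rw [← Real.exp_add]; congr 1; ring
    have h4 : Real.exp (-a + a * m) ≤ 1 := Real.exp_le_one_iff.2 (by nlinarith)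
    have h5 : 0 < a * m := by positivity
    nlinarith
  have hlo : Real.exp (-a) - 2 * a ^ 2 * m ≤ q := by
    have h1x : 0 < 1 - x := by linarith
    have h1 : (1 - x) ^ n ≤ q := by
      rw [hq]
      exact pow_le_pow_of_le_one h1x.le (by linarith) (by omega)
    have h2 : Real.exp (-(x / (1 - x))) ≤ 1 - x := by
      have h3 := Real.add_one_le_exp (x / (1 - x))
      have h4 : x / (1 - x) + 1 = (1 - x)⁻¹ := by field_simp; ring
      rw [Real.exp_neg]
      rw [h4] at h3
      exact inv_le_of_inv_le₀ h1x h3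
    have h5 : Real.exp (-a + -(a * x / (1 - x))) ≤ (1 - x) ^ n := by
      have : Real.exp (-a + -(a * x / (1 - x))) = Real.exp (-(x / (1 - x))) ^ n := by
        rw [← Real.exp_nat_mul]
        congr 1
        rw [← hnx]
        field_simp
        ring
      rw [this]
      exact pow_le_pow_left₀ (Real.exp_pos _).le h2 _
    rw [Real.exp_add] at h5
    have h6 := Real.add_one_le_exp (-(a * x / (1 - x)))
    have h7 : a * x / (1 - x) ≤ 2 * a ^ 2 * m := by
      rw [div_le_iff₀ h1x]
      have : a * x ≤ a * (a * m) := mul_le_mul_of_nonneg_left hxm ha.le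
      have h8 : 0 < a ^ 2 * m := by positivity
      nlinarith
    have h9 : 0 < 2 * a ^ 2 * m := by positivity
    have h10 : Real.exp (-a) * (1 - 2 * a ^ 2 * m)
        ≤ Real.exp (-a) * Real.exp (-(a * x / (1 - x))) :=
      mul_le_mul_of_nonneg_left (by linarith) hE0.le
    nlinarith
  have h1m : 0 < 1 - m := by linarith
  have key : (1 - q) / (a * (1 - m)) - (1 - Real.exp (-a)) / a
      = (Real.exp (-a) - q + m * (1 - Real.exp (-a))) / (a * (1 - m)) := by
    field_simp
    ring
  have hpos : 0 < a * (1 - m) := by positivity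
  rw [key, abs_div, abs_of_pos hpos, div_le_iff₀ hpos]
  have hr : 2 * (a + 2 * a ^ 2 + 1) / a * m * (a * (1 - m))
      = (a + 2 * a ^ 2 + 1) * m * (2 * (1 - m)) := by
    field_simp
  rw [hr]
  have hB : 0 < (a + 2 * a ^ 2 + 1) * m := by positivity
  have hs : (a + 2 * a ^ 2 + 1) * m ≤ (a + 2 * a ^ 2 + 1) * m * (2 * (1 - m)) :=
    le_mul_of_one_le_right hB.le (by linarith)
  refine le_trans ?_ hs
  have ham : 0 < a * m := by positivity
  have ham2 : 0 < a ^ 2 * m := by positivity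
  rw [abs_le]
  constructor <;> nlinarith
end
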